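/- Let Θ be a real symplectic 2n×2n matrix acting ℂ-linearly on ℂ^{2n} and α ∈ ℂ with |α| = 1, α ≠ 1. Then the Lagrangian subspaces Γ(Θ) and Γ(αΘ) of (ℂ^{2n} × ℂ^{2n}, (−σ_ℂ) ⊕ σ_ℂ) are transversal, the Maslov form m(Γ(Θ), Π², Γ(αΘ)) (defined on the 2n-dimensional space Π²) has zero signature and kernel of complex dimension 2·dim_ℂ(Θ(Π) ∩ Π), and consequently i(Γ(Θ), Π², Γ(αΘ)) = n − dim_ℂ(Θ(Π) ∩ Π). -/

import Mathlib

open scoped ComplexOrder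

noncomputable section

/-- `ℂ^{2n}`, written with coordinates indexed by `Fin n ⊕ Fin n`
(first block = `q`-coordinates, second block = `p`-coordinates). -/
abbrev CV (n : ℕ) := (Fin n ⊕ Fin n) → ℂ

/-- The sesquilinear extension `σ_ℂ(X,Y) = σ(X̄,Y)` of the standard symplectic form
`σ(x,y) = ⟨Jx,y⟩`, `J = [[0,−I],[I,0]]`, to `ℂ^{2n}` (conjugate-linear in the first
argument). -/
def sigmaC (n : ℕ) : CV n →ₛₗ[starRingEnd ℂ] CV n →ₗ[ℂ] ℂ :=
  LinearMap.mk₂'ₛₗ (starRingEnd ℂ) (RingHom.id ℂ)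
    (fun x y => (∑ i : Fin n, (starRingEnd ℂ) (x (Sum.inl i)) * y (Sum.inr i)) -
      ∑ i : Fin n, (starRingEnd ℂ) (x (Sum.inr i)) * y (Sum.inl i))
    (by intro x x' y; simp [add_mul, Finset.sum_add_distrib]; ring)
    (by
      intro c x y
      simp only [Pi.smul_apply, smul_eq_mul, map_mul]
      rw [mul_sub, Finset.mul_sum, Finset.mul_sum]
      congr 1 <;> exact Finset.sum_congr rfl (by intros; ring))
    (by intro x y y'; simp [mul_add, Finset.sum_add_distrib]; ring)
    (by
      intro c x y
      simp only [Pi.smul_apply, smul_eq_mul, RingHom.id_apply]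
      rw [mul_sub, Finset.mul_sum, Finset.mul_sum]
      congr 1 <;> exact Finset.sum_congr rfl (by intros; ring))

/-- The orthogonal of a subspace with respect to a sesquilinear form. -/
def sesqOrth {W : Type*} [AddCommGroup W] [Module ℂ W]
    (f : W →ₛₗ[starRingEnd ℂ] W →ₗ[ℂ] ℂ) (L : Submodule ℂ W) : Submodule ℂ W where
  carrier := {u | ∀ w ∈ L, f u w = 0}
  add_mem' := by
    intro a b ha hb w hw
    simp [map_add, ha w hw, hb w hw]
  zero_mem' := by
    intro w hw
    simp
  smul_mem' := by
    intro c u hu w hw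
    simp [LinearMap.map_smulₛₗ, hu w hw]

/-- A complex subspace is Lagrangian for a sesquilinear form when it coincides with its
orthogonal. -/
def IsLagrangianC {W : Type*} [AddCommGroup W] [Module ℂ W]
    (f : W →ₛₗ[starRingEnd ℂ] W →ₗ[ℂ] ℂ) (L : Submodule ℂ W) : Prop :=
  L = sesqOrth f L

/-- Negative inertia index of the (Hermitian) Maslov form of a triple of complex
Lagrangian subspaces: the supremum of complex dimensions of subspaces of
`L1 ∩ (L0 + L2)` on which `m(l1) = σ_ℂ(l0,l2)` is negative definite (negativity in the
complex order: real and `< 0`). -/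
def maslovIndexC {W : Type*} [AddCommGroup W] [Module ℂ W]
    (f : W →ₛₗ[starRingEnd ℂ] W →ₗ[ℂ] ℂ) (L0 L1 L2 : Submodule ℂ W) : ℕ :=
  sSup {d : ℕ | ∃ S : Submodule ℂ W, S ≤ L1 ⊓ (L0 ⊔ L2) ∧
    (∀ v ∈ S, v ≠ 0 → ∀ l0 ∈ L0, ∀ l2 ∈ L2, v = l0 + l2 → f l0 l2 < 0) ∧
    Module.finrank ℂ ↥S = d}

/-- The direct sum of two sesquilinear forms on a product space. -/
def sesqProd {W1 W2 : Type*} [AddCommGroup W1] [Module ℂ W1] [AddCommGroup W2] [Module ℂ W2]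
    (f : W1 →ₛₗ[starRingEnd ℂ] W1 →ₗ[ℂ] ℂ) (g : W2 →ₛₗ[starRingEnd ℂ] W2 →ₗ[ℂ] ℂ) :
    (W1 × W2) →ₛₗ[starRingEnd ℂ] (W1 × W2) →ₗ[ℂ] ℂ :=
  LinearMap.mk₂'ₛₗ (starRingEnd ℂ) (RingHom.id ℂ)
    (fun x y => f x.1 y.1 + g x.2 y.2)
    (by intro x x' y; simp [map_add]; ring)
    (by intro c x y; simp [LinearMap.map_smulₛₗ, smul_eq_mul, mul_add])
    (by intro x y y'; simp [map_add]; ring)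
    (by intro c x y; simp [smul_eq_mul, mul_add])

/-- The direct sum of `k` copies of a sesquilinear form. -/
def sesqPi {W : Type*} [AddCommGroup W] [Module ℂ W] (k : ℕ)
    (f : W →ₛₗ[starRingEnd ℂ] W →ₗ[ℂ] ℂ) :
    (Fin k → W) →ₛₗ[starRingEnd ℂ] (Fin k → W) →ₗ[ℂ] ℂ :=
  LinearMap.mk₂'ₛₗ (starRingEnd ℂ) (RingHom.id ℂ)
    (fun x y => ∑ i, f (x i) (y i))
    (by intro x x' y; simp [map_add, Finset.sum_add_distrib])
    (by intro c x y; simp [LinearMap.map_smulₛₗ, Finset.mul_sum])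
    (by intro x y y'; simp [map_add, Finset.sum_add_distrib])
    (by intro c x y; simp [Finset.mul_sum])

/-- The vertical Lagrangian subspace `Π = {(p,0)} ⊂ ℂ^{2n}`. -/
def PiV (n : ℕ) : Submodule ℂ (CV n) where
  carrier := {x | ∀ i, x (Sum.inr i) = 0}
  add_mem' := by intro a b ha hb i; simp [ha i, hb i]
  zero_mem' := by intro i; simp
  smul_mem' := by intro c x hx i; simp [hx i]

/-- The standard symplectic matrix `J = [[0,−I],[I,0]]`. -/
def symplJ (n : ℕ) : Matrix (Fin n ⊕ Fin n) (Fin n ⊕ Fin n) ℝ :=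
  Matrix.fromBlocks 0 (-1) 1 0

/-- The `ℂ`-linear action on `ℂ^{2n}` of a real `2n×2n` matrix. -/
def cAction {n : ℕ} (Θ : Matrix (Fin n ⊕ Fin n) (Fin n ⊕ Fin n) ℝ) : CV n →ₗ[ℂ] CV n :=
  (Θ.map (Complex.ofReal)).mulVecLin


/-- The form `(−σ_ℂ) ⊕ σ_ℂ` on `ℂ^{2n} × ℂ^{2n}`. -/
def sigma2C (n : ℕ) :
    (CV n × CV n) →ₛₗ[starRingEnd ℂ] (CV n × CV n) →ₗ[ℂ] ℂ :=
  sesqProd (-(sigmaC n)) (sigmaC n)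

/-- The form `(−σ_ℂ)^{⊕k} ⊕ σ_ℂ^{⊕k}` on `Σ^k × Σ^k`, `Σ = ℂ^{2n}`. -/
def bigSigmaC (n k : ℕ) :
    ((Fin k → CV n) × (Fin k → CV n)) →ₛₗ[starRingEnd ℂ]
      ((Fin k → CV n) × (Fin k → CV n)) →ₗ[ℂ] ℂ :=
  sesqProd (-(sesqPi k (sigmaC n))) (sesqPi k (sigmaC n))

/-- The Lagrangian subspace `Π² = Π × Π` of `ℂ^{2n} × ℂ^{2n}`. -/
def Pi2Sub (n : ℕ) : Submodule ℂ (CV n × CV n) := (PiV n).prod (PiV n)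

/-- The diagonal Lagrangian subspace `Δ = {(ξ,ξ)}` of `ℂ^{2n} × ℂ^{2n}`. -/
def DiaSub (n : ℕ) : Submodule ℂ (CV n × CV n) :=
  LinearMap.graph (LinearMap.id : CV n →ₗ[ℂ] CV n)

/-- The Lagrangian subspace `Π^{2k} = Π × ⋯ × Π` of `Σ^k × Σ^k`. -/
def Pi2kSub (n k : ℕ) : Submodule ℂ ((Fin k → CV n) × (Fin k → CV n)) :=
  (Submodule.pi Set.univ fun _ : Fin k => PiV n).prod
    (Submodule.pi Set.univ fun _ : Fin k => PiV n)

/-- The graph `Γ = {(ξ1,…,ξk,Θξ1,…,Θξk)}` of the diagonal action of `Θ` on `Σ^k`. -/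
def GamSub (n k : ℕ) (Θ : Matrix (Fin n ⊕ Fin n) (Fin n ⊕ Fin n) ℝ) :
    Submodule ℂ ((Fin k → CV n) × (Fin k → CV n)) :=
  LinearMap.graph (LinearMap.pi fun i : Fin k => (cAction Θ).comp (LinearMap.proj i))

/-- The graph `Δ^↺ = {(ξ1,…,ξk,ξ2,…,ξk,ξ1)}` of the cyclic shift on `Σ^k`. -/
def DcycSub (n k : ℕ) [NeZero k] : Submodule ℂ ((Fin k → CV n) × (Fin k → CV n)) :=
  LinearMap.graph (LinearMap.funLeft ℂ (CV n) (fun i : Fin k => i + 1))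

/-- Positive inertia index of the Hermitian Maslov form of a triple of complex
Lagrangian subspaces. -/
def maslovPosIndexC {W : Type*} [AddCommGroup W] [Module ℂ W]
    (f : W →ₛₗ[starRingEnd ℂ] W →ₗ[ℂ] ℂ) (L0 L1 L2 : Submodule ℂ W) : ℕ :=
  sSup {d : ℕ | ∃ S : Submodule ℂ W, S ≤ L1 ⊓ (L0 ⊔ L2) ∧
    (∀ v ∈ S, v ≠ 0 → ∀ l0 ∈ L0, ∀ l2 ∈ L2, v = l0 + l2 → 0 < f l0 l2) ∧
    Module.finrank ℂ ↥S = d}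

lemma sigmaC_apply (n : ℕ) (x y : CV n) : sigmaC n x y =
    (∑ i : Fin n, (starRingEnd ℂ) (x (Sum.inl i)) * y (Sum.inr i)) -
      ∑ i : Fin n, (starRingEnd ℂ) (x (Sum.inr i)) * y (Sum.inl i) := rfl

lemma sigma2C_apply (n : ℕ) (x y : CV n × CV n) : sigma2C n x y =
    -sigmaC n x.1 y.1 + sigmaC n x.2 y.2 := rfl

lemma sigmaC_conj (n : ℕ) (x y : CV n) :
    (starRingEnd ℂ) (sigmaC n x y) = - sigmaC n y x := by
  simp only [sigmaC_apply, map_sub, map_sum, map_mul, Complex.conj_conj]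
  rw [neg_sub]
  congr 1 <;> exact Finset.sum_congr rfl (by intros; ring)

lemma sigmaC_eq (n : ℕ) (x y : CV n) : sigmaC n x y =
    - (star x ⬝ᵥ ((symplJ n).map Complex.ofReal).mulVec y) := by
  simp [sigmaC_apply, symplJ, dotProduct, Matrix.mulVec, Fintype.sum_sum_type, Matrix.one_apply,
    Matrix.map_apply, apply_ite]
  ring

lemma sigmaC_cAction (n : ℕ) (Θ : Matrix (Fin n ⊕ Fin n) (Fin n ⊕ Fin n) ℝ)
    (hΘ : Θ.transpose * symplJ n * Θ = symplJ n) (x y : CV n) :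
    sigmaC n (cAction Θ x) (cAction Θ y) = sigmaC n x y := by
  have h : (Θ.map Complex.ofReal).conjTranspose * (symplJ n).map Complex.ofReal
      * Θ.map Complex.ofReal = (symplJ n).map Complex.ofReal := by
    have h1 : (Θ.map Complex.ofReal).conjTranspose = Θ.transpose.map Complex.ofReal := by
      ext i j; simp
    have h2 := congrArg (fun M => M.map (Complex.ofRealHom)) hΘ
    simp only [Matrix.map_mul] at h2
    rw [h1]
    exact h2
  rw [sigmaC_eq, sigmaC_eq]
  simp only [cAction, Matrix.mulVecLin_apply]
  rw [Matrix.star_mulVec, ← Matrix.dotProduct_mulVec, Matrix.mulVec_mulVec, Matrix.mulVec_mulVec,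
    h]

/-- embedding of `ℂ^n` as `Π`. -/
def jV (n : ℕ) : (Fin n → ℂ) →ₗ[ℂ] CV n where
  toFun u := Sum.elim u 0
  map_add' u v := by ext (i | i) <;> simp
  map_smul' c u := by ext (i | i) <;> simp

/-- second block of coordinates. -/
def rV (n : ℕ) : CV n →ₗ[ℂ] (Fin n → ℂ) where
  toFun x i := x (Sum.inr i)
  map_add' u v := rfl
  map_smul' c u := rfl

lemma mem_PiV (n : ℕ) (x : CV n) : x ∈ PiV n ↔ ∀ i, x (Sum.inr i) = 0 := Iff.rfl

lemma jV_mem (n : ℕ) (u : Fin n → ℂ) : jV n u ∈ PiV n := fun _ => rfl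

lemma finrank_PiV (n : ℕ) : Module.finrank ℂ (PiV n) = n := by
  have h : PiV n = LinearMap.range (jV n) := by
    ext x
    constructor
    · intro hx
      refine ⟨fun i => x (Sum.inl i), ?_⟩
      ext (i | i)
      · rfl
      · exact (hx i).symm
    · rintro ⟨u, rfl⟩
      exact jV_mem n u
  rw [h, LinearMap.finrank_range_of_inj]
  · simp
  · intro u v huv
    ext i
    exact congrFun huv (Sum.inl i)

lemma sigmaC_jV (n : ℕ) (x : CV n) (u : Fin n → ℂ) :
    sigmaC n x (jV n u) = -∑ i, (starRingEnd ℂ) (x (Sum.inr i)) * u i := by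
  simp [sigmaC_apply, jV]

lemma sigmaC_PiV (n : ℕ) {x y : CV n} (hx : x ∈ PiV n) (hy : y ∈ PiV n) :
    sigmaC n x y = 0 := by
  rw [mem_PiV] at hx hy
  simp [sigmaC_apply, hx, hy]

lemma normSum (n : ℕ) (b : Fin n → ℂ) :
    ∑ i, (starRingEnd ℂ) (b i) * b i = ((∑ i, Complex.normSq (b i) : ℝ) : ℂ) := by
  push_cast
  exact Finset.sum_congr rfl fun i _ => (Complex.normSq_eq_conj_mul_self).symm

lemma PiV_of_orth (n : ℕ) (x : CV n) (h : ∀ p ∈ PiV n, sigmaC n x p = 0) : x ∈ PiV n := by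
  have h1 := h _ (jV_mem n (rV n x))
  rw [sigmaC_jV, neg_eq_zero] at h1
  have h2 := normSum n (rV n x)
  rw [show ∑ i, (starRingEnd ℂ) (rV n x i) * rV n x i = 0 from h1] at h2
  have h3 : ∑ i, Complex.normSq (rV n x i) = 0 := by exact_mod_cast h2.symm
  rw [Finset.sum_eq_zero_iff_of_nonneg (fun i _ => Complex.normSq_nonneg _)] at h3
  intro i
  exact Complex.normSq_eq_zero.1 (h3 i (Finset.mem_univ i))

lemma sigmaC_nondeg (n : ℕ) (x : CV n) (h : ∀ y, sigmaC n x y = 0) : x = 0 := by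
  classical
  ext (i | i)
  · have := h (Pi.single (Sum.inr i) 1)
    simpa [sigmaC_apply, Pi.single_apply] using this
  · have := h (Pi.single (Sum.inl i) 1)
    simpa [sigmaC_apply, Pi.single_apply] using this

lemma decomp {n : ℕ} {α : ℂ} (hα1 : α ≠ 1) {a b x z : CV n} (h1 : x = a + b)
    (h2 : z = a + α • b) :
    b = (1 - α)⁻¹ • (x - z) ∧ a = (1 - α)⁻¹ • (z - α • x) := by
  have h : (1 - α) ≠ 0 := sub_ne_zero.2 hα1.symm
  subst h1 h2
  constructor
  · rw [eq_inv_smul_iff₀ h]; module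
  · rw [eq_inv_smul_iff₀ h]; module

lemma transv {n : ℕ} (E : CV n ≃ₗ[ℂ] CV n) {α : ℂ} (hα1 : α ≠ 1) :
    LinearMap.graph (E : CV n →ₗ[ℂ] CV n) ⊔ LinearMap.graph (α • (E : CV n →ₗ[ℂ] CV n)) = ⊤ := by
  have h : (1 - α) ≠ 0 := sub_ne_zero.2 hα1.symm
  rw [eq_top_iff]
  rintro ⟨x, y⟩ -
  obtain ⟨z, rfl⟩ := E.surjective y
  rw [Submodule.mem_sup]
  refine ⟨((1 - α)⁻¹ • (z - α • x), E ((1 - α)⁻¹ • (z - α • x))), by simp [LinearMap.mem_graph_iff],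
    ((1 - α)⁻¹ • (x - z), α • E ((1 - α)⁻¹ • (x - z))),
    by rw [LinearMap.mem_graph_iff]; rfl, ?_⟩
  ext1
  · simp only [Prod.fst_add]
    rw [← smul_add, inv_smul_eq_iff₀ h]; module
  · simp only [Prod.snd_add]
    rw [← map_smul, ← map_add]
    congr 1
    rw [smul_comm, ← smul_add, inv_smul_eq_iff₀ h]; module

lemma form_eq {n : ℕ} (E : CV n ≃ₗ[ℂ] CV n)
    (hE : ∀ x y, sigmaC n (E x) (E y) = sigmaC n x y) {α : ℂ} (hα : ‖α‖ = 1) (hα1 : α ≠ 1)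
    {v w v0 v2 w0 w2 : CV n × CV n} (hv : v ∈ Pi2Sub n) (hw : w ∈ Pi2Sub n)
    (hv0 : v0 ∈ LinearMap.graph (E : CV n →ₗ[ℂ] CV n))
    (hv2 : v2 ∈ LinearMap.graph (α • (E : CV n →ₗ[ℂ] CV n)))
    (hw0 : w0 ∈ LinearMap.graph (E : CV n →ₗ[ℂ] CV n))
    (hw2 : w2 ∈ LinearMap.graph (α • (E : CV n →ₗ[ℂ] CV n)))
    (hvs : v = v0 + v2) (hws : w = w0 + w2) :
    sigma2C n v0 w2 = -((1 - (starRingEnd ℂ) α)⁻¹ * sigmaC n (E.symm v.2) w.1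
      - (1 - α)⁻¹ * sigmaC n v.1 (E.symm w.2)) := by
  have h : (1 - α) ≠ 0 := sub_ne_zero.2 hα1.symm
  have hαα : (starRingEnd ℂ) α * α = 1 := by
    rw [← Complex.normSq_eq_conj_mul_self, Complex.normSq_eq_norm_sq, hα]; simp
  have h' : (1 - (starRingEnd ℂ) α) ≠ 0 := by
    intro h0
    apply h
    have := congrArg (starRingEnd ℂ) h0
    simpa using this
  obtain ⟨a, a'⟩ := v0
  obtain ⟨b, b'⟩ := v2
  obtain ⟨c, c'⟩ := w0
  obtain ⟨d, d'⟩ := w2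
  obtain ⟨x, y⟩ := v
  obtain ⟨x', y'⟩ := w
  obtain ⟨z, rfl⟩ := E.surjective y
  obtain ⟨z', rfl⟩ := E.surjective y'
  simp only [LinearMap.mem_graph_iff, LinearMap.smul_apply, LinearEquiv.coe_coe] at hv0 hv2 hw0 hw2
  subst hv0 hv2 hw0 hw2
  simp only [Prod.mk_add_mk, Prod.mk.injEq, ← map_smul, ← map_add, E.injective.eq_iff] at hvs hws
  obtain ⟨hx, hz⟩ := hvs
  obtain ⟨hx', hz'⟩ := hws
  obtain ⟨-, ha⟩ := decomp hα1 hx hz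
  obtain ⟨hd, -⟩ := decomp hα1 hx' hz'
  have e1 : sigmaC n x x' = 0 := sigmaC_PiV n hv.1 hw.1
  have e2 : sigmaC n z z' = 0 := by rw [← hE]; exact sigmaC_PiV n hv.2 hw.2
  rw [sigma2C_apply]
  simp only [← map_smul, hE, LinearEquiv.symm_apply_apply]
  rw [ha, hd]
  simp only [map_smul, map_sub, LinearMap.map_smulₛₗ, LinearMap.smul_apply, LinearMap.sub_apply,
    smul_eq_mul, e1, e2, map_inv₀, map_one]
  field_simp
  linear_combination (sigmaC n x z') * hαα

lemma finrank_prodSub {n : ℕ} (p q : Submodule ℂ (CV n)) :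
    Module.finrank ℂ ↥(p.prod q) = Module.finrank ℂ p + Module.finrank ℂ q := by
  rw [← Module.finrank_prod]
  exact LinearEquiv.finrank_eq
    { toFun := fun v => (⟨v.1.1, v.2.1⟩, ⟨v.1.2, v.2.2⟩)
      invFun := fun v => ⟨(v.1.1, v.2.1), ⟨v.1.2, v.2.2⟩⟩
      map_add' := fun _ _ => rfl
      map_smul' := fun _ _ => rfl
      left_inv := fun _ => rfl
      right_inv := fun _ => rfl }

lemma sSup_eq {n : ℕ} (E : CV n ≃ₗ[ℂ] CV n)
    (hE : ∀ x y, sigmaC n (E x) (E y) = sigmaC n x y) {α : ℂ} (hα : ‖α‖ = 1) (hα1 : α ≠ 1)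
    (ε : ℝ) (hε : ε * ε = 1) :
    sSup {d : ℕ | ∃ S : Submodule ℂ (CV n × CV n),
      S ≤ Pi2Sub n ⊓ (LinearMap.graph (E : CV n →ₗ[ℂ] CV n) ⊔
        LinearMap.graph (α • (E : CV n →ₗ[ℂ] CV n))) ∧
      (∀ v ∈ S, v ≠ 0 → ∀ l0 ∈ LinearMap.graph (E : CV n →ₗ[ℂ] CV n),
        ∀ l2 ∈ LinearMap.graph (α • (E : CV n →ₗ[ℂ] CV n)), v = l0 + l2 →
        0 < (ε : ℂ) * sigma2C n l0 l2) ∧ Module.finrank ℂ ↥S = d}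
    = n - Module.finrank ℂ ↥(Submodule.map (E : CV n →ₗ[ℂ] CV n) (PiV n) ⊓ PiV n) := by
  have h : (1 - α) ≠ 0 := sub_ne_zero.2 hα1.symm
  set N := Submodule.map (E : CV n →ₗ[ℂ] CV n) (PiV n) ⊓ PiV n with hN
  have memN : ∀ y ∈ PiV n, E.symm y ∈ PiV n → y ∈ N := fun y hy hy' =>
    ⟨⟨E.symm y, hy', by simp⟩, hy⟩
  have memN' : ∀ y ∈ N, E.symm y ∈ PiV n := by
    rintro y ⟨⟨z, hz, rfl⟩, -⟩
    simpa using hz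
  apply IsGreatest.csSup_eq
  constructor
  · obtain ⟨C, hC⟩ := Submodule.exists_isCompl N
    set B : CV n →ₗ[ℂ] (Fin n → ℂ) := rV n ∘ₗ (E.symm : CV n →ₗ[ℂ] CV n) with hB
    set g : CV n →ₗ[ℂ] CV n × CV n :=
      (((ε : ℂ) * (1 - α)⁻¹) • (jV n ∘ₗ B)).prod LinearMap.id with hg
    have hginj : Function.Injective g := fun x y hxy => congrArg Prod.snd hxy
    refine ⟨(C ⊓ PiV n).map g, ?_, ?_, ?_⟩
    · rw [transv E hα1, inf_top_eq]
      rintro _ ⟨y, hy, rfl⟩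
      exact ⟨(PiV n).smul_mem _ (jV_mem n _), hy.2⟩
    · rintro _ ⟨y, hy, rfl⟩ hne l0 hl0 l2 hl2 hs
      have hy0 : y ≠ 0 := by rintro rfl; simp at hne
      have hmem : g y ∈ Pi2Sub n := ⟨(PiV n).smul_mem _ (jV_mem n _), hy.2⟩
      rw [form_eq E hE hα hα1 hmem hmem hl0 hl2 hl0 hl2 hs hs]
      have g1 : (g y).1 = jV n (((ε : ℂ) * (1 - α)⁻¹) • B y) := by
        simp [hg]
      have g2 : (g y).2 = y := rfl
      have hs1 : sigmaC n (E.symm y) (jV n (((ε : ℂ) * (1 - α)⁻¹) • B y))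
          = -(((ε : ℂ) * (1 - α)⁻¹) * ((∑ i, Complex.normSq (B y i) : ℝ) : ℂ)) := by
        rw [sigmaC_jV, ← normSum, Finset.mul_sum]
        congr 1
        refine Finset.sum_congr rfl fun i _ => ?_
        simp only [Pi.smul_apply, smul_eq_mul]
        rw [show E.symm y (Sum.inr i) = B y i from rfl]
        ring
      have hs2 := sigmaC_conj n (E.symm y) (jV n (((ε : ℂ) * (1 - α)⁻¹) • B y))
      rw [← neg_eq_iff_eq_neg, hs1] at hs2
      rw [g1, g2, hs1, ← hs2]
      have hpos : 0 < ∑ i, Complex.normSq (B y i) := by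
        refine lt_of_le_of_ne (Finset.sum_nonneg fun i _ => Complex.normSq_nonneg _) fun h0 => ?_
        have h3 := h0.symm
        rw [Finset.sum_eq_zero_iff_of_nonneg (fun i _ => Complex.normSq_nonneg _)] at h3
        have h4 : E.symm y ∈ PiV n := fun i =>
          Complex.normSq_eq_zero.1 (h3 i (Finset.mem_univ i))
        exact hy0 ((Submodule.disjoint_def.1 hC.disjoint) y (memN y hy.2 h4) hy.1)
      have hfin : (ε : ℂ) * -((1 - (starRingEnd ℂ) α)⁻¹ *
          -(((ε : ℂ) * (1 - α)⁻¹) * ((∑ i, Complex.normSq (B y i) : ℝ) : ℂ)) - (1 - α)⁻¹ *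
          -(starRingEnd ℂ) (-(((ε : ℂ) * (1 - α)⁻¹) * ((∑ i, Complex.normSq (B y i) : ℝ) : ℂ))))
          = ((2 * Complex.normSq ((1 - α)⁻¹) * ∑ i, Complex.normSq (B y i) : ℝ) : ℂ) := by
        have hε' : (ε : ℂ) * ε = 1 := by exact_mod_cast hε
        generalize ∑ i, Complex.normSq (B y i) = r
        rw [Complex.ofReal_mul, Complex.ofReal_mul, Complex.normSq_eq_conj_mul_self]
        simp only [map_neg, map_mul, map_inv₀, map_sub, map_one, Complex.conj_ofReal]
        push_cast
        linear_combination (2 * (1 - (starRingEnd ℂ) α)⁻¹ * (1 - α)⁻¹ * (r : ℂ)) * hε'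
      rw [hfin]
      have : 0 < Complex.normSq ((1 - α)⁻¹) := Complex.normSq_pos.2 (inv_ne_zero h)
      exact_mod_cast (by positivity)
    · rw [← LinearEquiv.finrank_eq (Submodule.equivMapOfInjective g hginj (C ⊓ PiV n))]
      have hsup : N ⊔ C ⊓ PiV n = PiV n := by
        rw [← sup_inf_assoc_of_le C (show N ≤ PiV n from inf_le_right), hC.sup_eq_top, top_inf_eq]
      have hinf : N ⊓ (C ⊓ PiV n) = ⊥ := by
        rw [← inf_assoc, hC.inf_eq_bot, bot_inf_eq]
      have := Submodule.finrank_sup_add_finrank_inf_eq N (C ⊓ PiV n)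
      rw [hsup, hinf, finrank_bot, finrank_PiV] at this
      omega
  · rintro d ⟨S, hS, hneg, rfl⟩
    have hdisj : S ⊓ (PiV n).prod N = ⊥ := by
      rw [Submodule.eq_bot_iff]
      rintro v ⟨hvS, hvN⟩
      by_contra hv0
      have hv := hS hvS
      obtain ⟨l0, hl0, l2, hl2, hs⟩ := Submodule.mem_sup.1 hv.2
      have hp := hneg v hvS hv0 l0 hl0 l2 hl2 hs.symm
      rw [form_eq E hE hα hα1 hv.1 hv.1 hl0 hl2 hl0 hl2 hs.symm hs.symm,
        sigmaC_PiV n (memN' _ hvN.2) hvN.1, sigmaC_PiV n hvN.1 (memN' _ hvN.2)] at hp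
      simp at hp
    have h1 := Submodule.finrank_sup_add_finrank_inf_eq S ((PiV n).prod N)
    rw [hdisj, finrank_bot, finrank_prodSub, finrank_PiV] at h1
    have h2 : S ⊔ (PiV n).prod N ≤ (PiV n).prod (PiV n) :=
      sup_le (fun v hv => (hS hv).1) (Submodule.prod_mono le_rfl inf_le_right)
    have h3 := Submodule.finrank_mono h2
    rw [finrank_prodSub, finrank_PiV] at h3
    omega

lemma kernel_part {n : ℕ} (E : CV n ≃ₗ[ℂ] CV n)
    (hE : ∀ x y, sigmaC n (E x) (E y) = sigmaC n x y) {α : ℂ} (hα : ‖α‖ = 1) (hα1 : α ≠ 1) :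
    ∃ K : Submodule ℂ (CV n × CV n), K ≤ Pi2Sub n ∧
      (∀ v, v ∈ K ↔ v ∈ Pi2Sub n ∧
        ∀ v0 v2, v0 ∈ LinearMap.graph (E : CV n →ₗ[ℂ] CV n) →
          v2 ∈ LinearMap.graph (α • (E : CV n →ₗ[ℂ] CV n)) →
          v = v0 + v2 →
          ∀ w ∈ Pi2Sub n,
            ∀ w0 w2, w0 ∈ LinearMap.graph (E : CV n →ₗ[ℂ] CV n) →
              w2 ∈ LinearMap.graph (α • (E : CV n →ₗ[ℂ] CV n)) → w = w0 + w2 →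
              sigma2C n v0 w2 = 0) ∧
      Module.finrank ℂ ↥K
        = 2 * Module.finrank ℂ
          ↥(Submodule.map (E : CV n →ₗ[ℂ] CV n) (PiV n) ⊓ PiV n) := by
  have h : (1 - α) ≠ 0 := sub_ne_zero.2 hα1.symm
  have h' : (1 - (starRingEnd ℂ) α) ≠ 0 := by
    intro h0
    apply h
    have := congrArg (starRingEnd ℂ) h0
    simpa using this
  have hdec : ∀ v : CV n × CV n, ∃ v0 ∈ LinearMap.graph (E : CV n →ₗ[ℂ] CV n),
      ∃ v2 ∈ LinearMap.graph (α • (E : CV n →ₗ[ℂ] CV n)), v0 + v2 = v := fun v =>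
    Submodule.mem_sup.1 (by rw [transv E hα1]; trivial)
  set N := Submodule.map (E : CV n →ₗ[ℂ] CV n) (PiV n) ⊓ PiV n with hN
  refine ⟨(Submodule.map (E.symm : CV n →ₗ[ℂ] CV n) N).prod N, ?_, ?_, ?_⟩
  · rintro ⟨x, y⟩ ⟨⟨_, ⟨⟨z, hz, rfl⟩, -⟩, hx⟩, hy⟩
    refine ⟨?_, hy.2⟩
    have hx' : z = x := by simpa using hx
    exact hx' ▸ hz
  · rintro ⟨x, y⟩
    constructor
    · rintro ⟨⟨_, ⟨⟨z, hz, rfl⟩, hz2⟩, hx⟩, ⟨⟨u, hu, hu'⟩, hy⟩⟩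
      have hx' : z = x := by simpa using hx
      subst hx'
      have hu2 : E u = y := hu'
      subst hu2
      refine ⟨⟨hz, hy⟩, ?_⟩
      intro v0 v2 hv0 hv2 hvs w hw w0 w2 hw0 hw2 hws
      rw [form_eq E hE hα hα1 ⟨hz, hy⟩ hw hv0 hv2 hw0 hw2 hvs hws]
      have e1 : sigmaC n (E.symm (E u)) w.1 = 0 := by
        rw [E.symm_apply_apply]; exact sigmaC_PiV n hu hw.1
      have e2 : sigmaC n z (E.symm w.2) = 0 := by
        rw [← hE, E.apply_symm_apply]; exact sigmaC_PiV n hz2 hw.2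
      simp only [e1, e2]; simp
    · rintro ⟨hv, hk⟩
      obtain ⟨v0, hv0, v2, hv2, hvs⟩ := hdec (x, y)
      have hk2 := hk v0 v2 hv0 hv2 hvs.symm
      have hy : E.symm y ∈ PiV n := by
        apply PiV_of_orth
        intro p hp
        have hw : ((p, 0) : CV n × CV n) ∈ Pi2Sub n := ⟨hp, (PiV n).zero_mem⟩
        obtain ⟨w0, hw0, w2, hw2, hws⟩ := hdec (p, 0)
        have := hk2 _ hw w0 w2 hw0 hw2 hws.symm
        rw [form_eq E hE hα hα1 hv hw hv0 hv2 hw0 hw2 hvs.symm hws.symm] at this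
        simpa [h'] using this
      have hx : E x ∈ PiV n := by
        apply PiV_of_orth
        intro p hp
        have hw : ((0, p) : CV n × CV n) ∈ Pi2Sub n := ⟨(PiV n).zero_mem, hp⟩
        obtain ⟨w0, hw0, w2, hw2, hws⟩ := hdec (0, p)
        have := hk2 _ hw w0 w2 hw0 hw2 hws.symm
        rw [form_eq E hE hα hα1 hv hw hv0 hv2 hw0 hw2 hvs.symm hws.symm] at this
        rw [← E.apply_symm_apply p, hE]
        simpa [h] using this
      exact ⟨⟨E x, ⟨⟨x, hv.1, rfl⟩, hx⟩, by simp⟩, ⟨⟨E.symm y, hy, by simp⟩, hv.2⟩⟩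
  · rw [finrank_prodSub, two_mul,
      LinearEquiv.finrank_map_eq E.symm N]

/-- for `|α| = 1`, `α ≠ 1`, the Lagrangian subspaces `Γ(Θ)` and `Γ(αΘ)`
are transversal, the Maslov form `m(Γ(Θ), Π², Γ(αΘ))` (defined on `Π²`) has zero
signature and kernel of complex dimension `2·dim(Θ(Π) ∩ Π)`, and
`i(Γ(Θ), Π², Γ(αΘ)) = n − dim(Θ(Π) ∩ Π)`. -/
theorem maslov_index_graphs_vertical
    (n : ℕ) (Θ : Matrix (Fin n ⊕ Fin n) (Fin n ⊕ Fin n) ℝ)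
    (hΘ : Θ.transpose * symplJ n * Θ = symplJ n)
    (α : ℂ) (hα : ‖α‖ = 1) (hα1 : α ≠ 1) :
    (LinearMap.graph (cAction Θ) ⊔ LinearMap.graph (α • cAction Θ) = ⊤) ∧
    (∃ K : Submodule ℂ (CV n × CV n), K ≤ Pi2Sub n ∧
      (∀ v, v ∈ K ↔ v ∈ Pi2Sub n ∧
        ∀ v0 v2, v0 ∈ LinearMap.graph (cAction Θ) → v2 ∈ LinearMap.graph (α • cAction Θ) →
          v = v0 + v2 →
          ∀ w ∈ Pi2Sub n,
            ∀ w0 w2, w0 ∈ LinearMap.graph (cAction Θ) →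
              w2 ∈ LinearMap.graph (α • cAction Θ) → w = w0 + w2 →
              sigma2C n v0 w2 = 0) ∧
      Module.finrank ℂ ↥K
        = 2 * Module.finrank ℂ ↥(Submodule.map (cAction Θ) (PiV n) ⊓ PiV n)) ∧
    maslovPosIndexC (sigma2C n) (LinearMap.graph (cAction Θ)) (Pi2Sub n)
        (LinearMap.graph (α • cAction Θ))
      = maslovIndexC (sigma2C n) (LinearMap.graph (cAction Θ)) (Pi2Sub n)
          (LinearMap.graph (α • cAction Θ)) ∧
    (maslovIndexC (sigma2C n) (LinearMap.graph (cAction Θ)) (Pi2Sub n)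
        (LinearMap.graph (α • cAction Θ)) : ℤ)
      = (n : ℤ)
        - (Module.finrank ℂ ↥(Submodule.map (cAction Θ) (PiV n) ⊓ PiV n) : ℤ) := by
  have hT := sigmaC_cAction n Θ hΘ
  have hinj : Function.Injective (cAction Θ) := by
    rw [injective_iff_map_eq_zero]
    intro x hx
    apply sigmaC_nondeg
    intro y
    rw [← hT, hx]
    simp
  obtain ⟨E, hEc⟩ : ∃ E : CV n ≃ₗ[ℂ] CV n, (E : CV n →ₗ[ℂ] CV n) = cAction Θ :=
    ⟨LinearEquiv.ofInjectiveEndo (cAction Θ) hinj, by ext; simp⟩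
  have hE : ∀ x y, sigmaC n (E x) (E y) = sigmaC n x y := by
    intro x y
    have := hT x y
    rw [← hEc] at this
    exact this
  rw [← hEc]
  have hneg : maslovIndexC (sigma2C n) (LinearMap.graph (E : CV n →ₗ[ℂ] CV n)) (Pi2Sub n)
      (LinearMap.graph (α • (E : CV n →ₗ[ℂ] CV n)))
      = n - Module.finrank ℂ ↥(Submodule.map (E : CV n →ₗ[ℂ] CV n) (PiV n) ⊓ PiV n) := by
    rw [← sSup_eq E hE hα hα1 (-1) (by norm_num)]
    simp [maslovIndexC]
  have hpos : maslovPosIndexC (sigma2C n) (LinearMap.graph (E : CV n →ₗ[ℂ] CV n)) (Pi2Sub n)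
      (LinearMap.graph (α • (E : CV n →ₗ[ℂ] CV n)))
      = n - Module.finrank ℂ ↥(Submodule.map (E : CV n →ₗ[ℂ] CV n) (PiV n) ⊓ PiV n) := by
    rw [← sSup_eq E hE hα hα1 1 (by norm_num)]
    simp [maslovPosIndexC]
  refine ⟨transv E hα1, kernel_part E hE hα hα1, by rw [hneg, hpos], ?_⟩
  rw [hneg]
  have hle : Module.finrank ℂ ↥(Submodule.map (E : CV n →ₗ[ℂ] CV n) (PiV n) ⊓ PiV n) ≤ n :=
    (Submodule.finrank_mono inf_le_right).trans (finrank_PiV n).le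
  omega


end
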